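/- arXiv:1812.09640 — 6 statements merged into one kernel-verified Lean document; each statement's English description precedes it below -/
import Mathlib

section
/- Suppose the choice function is Bayes-optimal for a utility u : X×A → ℝ, i.e., for every signal s with p(s) > 0 and every action a, η(a|s) > 0 implies ∑_x p(x|s)·u(x,a) ≥ ∑_x p(x|s)·u(x,b) for all b ∈ A. Then the revealed posteriors satisfy the no-improving-action-switches (NIAS) inequalities: for every action a with π̄(a) > 0 and every b ∈ A, ∑_{x∈X} p(x|a)·(u(x,a) − u(x,b)) ≥ 0. -/
open Finset

/-- The induced signal probability `p(s) = ∑_x μ(x) α(s|x)`. -/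
noncomputable def sigProb {X S : Type*} [Fintype X]
    (μ : X → ℝ) (α : X → S → ℝ) (s : S) : ℝ :=
  ∑ x, μ x * α x s

/-- The Bayesian posterior `p(x|s) = μ(x) α(s|x) / p(s)`. -/
noncomputable def post {X S : Type*} [Fintype X]
    (μ : X → ℝ) (α : X → S → ℝ) (s : S) (x : X) : ℝ :=
  μ x * α x s / sigProb μ α s

/-- The induced action-selection policy `π(a|x) = ∑_s α(s|x) η(a|s)`. -/
noncomputable def policy {X S A : Type*} [Fintype S]
    (α : X → S → ℝ) (η : S → A → ℝ) (x : X) (a : A) : ℝ :=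
  ∑ s, α x s * η s a

/-- The induced action probability `π̄(a) = ∑_x μ(x) π(a|x)`. -/
noncomputable def actProb {X S A : Type*} [Fintype X] [Fintype S]
    (μ : X → ℝ) (α : X → S → ℝ) (η : S → A → ℝ) (a : A) : ℝ :=
  ∑ x, μ x * policy α η x a

/-- The revealed posterior `p(x|a) = μ(x) π(a|x) / π̄(a)`. -/
noncomputable def revPost {X S A : Type*} [Fintype X] [Fintype S]
    (μ : X → ℝ) (α : X → S → ℝ) (η : S → A → ℝ) (a : A) (x : X) : ℝ :=
  μ x * policy α η x a / actProb μ α η a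

/-- If the choice function is Bayes-optimal for the utility `u`, then the revealed
posteriors satisfy the NIAS (no-improving-action-switches) inequalities. -/
theorem nias_of_bayes_optimal_choice
    {X S A : Type*} [Fintype X] [Fintype S] [Fintype A]
    (μ : X → ℝ) (hμpos : ∀ x, 0 < μ x) (hμsum : ∑ x, μ x = 1)
    (α : X → S → ℝ) (hαnn : ∀ x s, 0 ≤ α x s) (hαsum : ∀ x, ∑ s, α x s = 1)
    (η : S → A → ℝ) (hηnn : ∀ s a, 0 ≤ η s a) (hηsum : ∀ s, ∑ a, η s a = 1)
    (u : X → A → ℝ)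
    (hopt : ∀ s, 0 < sigProb μ α s → ∀ a, 0 < η s a →
      ∀ b, ∑ x, post μ α s x * u x b ≤ ∑ x, post μ α s x * u x a) :
    ∀ a, 0 < actProb μ α η a →
      ∀ b, 0 ≤ ∑ x, revPost μ α η a x * (u x a - u x b) := by
  intro a ha b
  have key : ∀ s, 0 ≤ η s a * ∑ x, μ x * α x s * (u x a - u x b) := by
    intro s
    rcases (hηnn s a).eq_or_lt with h0 | hpos
    · rw [← h0, zero_mul]
    have hnn : ∀ x ∈ (Finset.univ : Finset X), 0 ≤ μ x * α x s :=
      fun x _ => mul_nonneg (hμpos x).le (hαnn x s)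
    have hp : 0 ≤ sigProb μ α s := Finset.sum_nonneg hnn
    refine mul_nonneg hpos.le ?_
    rcases hp.eq_or_lt with hz | hp
    · have hz' := (Finset.sum_eq_zero_iff_of_nonneg hnn).1 hz.symm
      refine (Finset.sum_eq_zero fun x hx => ?_).ge
      rw [hz' x hx, zero_mul]
    · have h := hopt s hp a hpos b
      have e : ∑ x, μ x * α x s * (u x a - u x b) =
          sigProb μ α s * (∑ x, post μ α s x * u x a - ∑ x, post μ α s x * u x b) := by
        rw [← Finset.sum_sub_distrib, Finset.mul_sum]
        refine Finset.sum_congr rfl fun x _ => ?_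
        unfold post
        have := hp.ne'
        field_simp
      rw [e]
      exact mul_nonneg hp.le (sub_nonneg.2 h)
  have e : ∑ x, revPost μ α η a x * (u x a - u x b) =
      (∑ s, η s a * ∑ x, μ x * α x s * (u x a - u x b)) / actProb μ α η a := by
    simp only [Finset.mul_sum]
    rw [Finset.sum_comm, Finset.sum_div]
    refine Finset.sum_congr rfl fun x _ => ?_
    unfold revPost policy
    rw [div_mul_eq_mul_div, Finset.mul_sum, Finset.sum_mul]
    congr 1
    refine Finset.sum_congr rfl fun s _ => ?_
    ring
  rw [e]
  exact div_nonneg (Finset.sum_nonneg fun s _ => key s) ha.le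
end

section
/- Let K ≥ 1 and G : {1,…,K} × {1,…,K} → ℝ satisfy the no-improving-attention-cycles (NIAC) condition: for every m ≥ 2 and every sequence of distinct indices k_1,…,k_m in {1,…,K} (with k_{m+1} = k_1), ∑_{i=1}^{m} ( G(k_i,k_i) − G(k_{i+1},k_i) ) ≥ 0. Then there exists a nonnegative cost function C : {1,…,K} → ℝ, C(k) ≥ 0 for all k, rationalizing the attention choices: G(k,k) − C(k) ≥ G(w,k) − C(w) for all k, w ∈ {1,…,K}. -/
open Finset

def pathCost {α : Type} (a : α → α → ℝ) : List α → ℝ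
  | [] => 0
  | [_] => 0
  | x :: y :: l => a x y + pathCost a (y :: l)

lemma pathCost_append {α : Type} (a : α → α → ℝ) (l₁ : List α) (k : α) (l₂ : List α) :
    pathCost a (l₁ ++ k :: l₂) = pathCost a (l₁ ++ [k]) + pathCost a (k :: l₂) := by
  induction l₁ with
  | nil => simp [pathCost]
  | cons x t ih =>
    cases t with
    | nil => simp [pathCost]
    | cons y t =>
      simp only [List.cons_append, pathCost] at ih ⊢
      rw [ih]; ring

lemma pathCost_ofFn {α : Type} (a : α → α → ℝ) (x : α) (n : ℕ) (f : Fin (n + 1) → α) :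
    pathCost a (List.ofFn f ++ [x]) =
      ∑ i : Fin n, a (f i.castSucc) (f i.succ) + a (f (Fin.last n)) x := by
  induction n with
  | zero => simp [pathCost]
  | succ n ih =>
    have h := ih (fun i => f i.succ)
    rw [List.ofFn_succ, Fin.sum_univ_succ]
    rw [List.ofFn_succ] at h ⊢
    simp only [List.cons_append, pathCost] at h ⊢
    rw [h]
    simp only [Fin.succ_castSucc, Fin.succ_last, Fin.castSucc_zero]
    ring

/-- If the no-improving-attention-cycles (NIAC) condition holds (over all cyclic
sequences of distinct indices of length at least two), then there exists a nonnegative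
attention-cost function rationalizing the attention choices. -/
theorem rationalizing_costs_of_niac
    (K : ℕ) (hK : 1 ≤ K) (G : Fin K → Fin K → ℝ)
    (hNIAC : ∀ m : ℕ, ∀ k : Fin (m + 2) → Fin K, Function.Injective k →
      0 ≤ ∑ i, (G (k i) (k i) - G (k (i + 1)) (k i))) :
    ∃ C : Fin K → ℝ, (∀ k, 0 ≤ C k) ∧ ∀ k w, G w k - C w ≤ G k k - C k := by
  let a : Fin K → Fin K → ℝ := fun k w => G k k - G w k
  have hcyc : ∀ (k : Fin K) (y : Fin K) (l : List (Fin K)), (k :: y :: l).Nodup →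
      0 ≤ pathCost a (k :: y :: l ++ [k]) := by
    intro k y l hnd
    have hinj := List.nodup_iff_injective_get.mp hnd
    have h := hNIAC l.length (k :: y :: l).get hinj
    have e := pathCost_ofFn a k (l.length + 1) (k :: y :: l).get
    rw [List.ofFn_get] at e
    rw [e]
    rw [Fin.sum_univ_castSucc] at h
    simp only [Fin.coeSucc_eq_succ, Fin.last_add_one] at h
    exact h
  have hfin : ∀ k : Fin K, {l : List (Fin K) | (k :: l).Nodup}.Finite := by
    intro k
    refine (List.finite_length_le (Fin K) K).subset ?_
    intro l hl
    have := List.Nodup.length_le_card (List.nodup_cons.mp hl).2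
    simpa using this
  have hmin : ∀ k : Fin K, ∃ p : List (Fin K), (k :: p).Nodup ∧
      ∀ l : List (Fin K), (k :: l).Nodup → pathCost a (k :: p) ≤ pathCost a (k :: l) := by
    intro k
    obtain ⟨p, hp, h⟩ := Set.exists_min_image _ (fun l => pathCost a (k :: l)) (hfin k)
      ⟨[], by simp⟩
    exact ⟨p, hp, fun l hl => h l hl⟩
  choose p hp hpm using hmin
  have key : ∀ k w, pathCost a (k :: p k) ≤ a k w + pathCost a (w :: p w) := by
    intro k w
    by_cases hk : k ∈ w :: p w
    · obtain ⟨l₁, l₂, hl⟩ := List.append_of_mem hk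
      have hnd := hp w
      rw [hl] at hnd
      have h1 := hpm k l₂ (List.nodup_append.mp hnd).2.1
      cases l₁ with
      | nil =>
        simp only [List.nil_append, List.cons.injEq] at hl
        obtain ⟨rfl, -⟩ := hl
        simp [a]
      | cons y t =>
        have hyw : w = y := by simpa using (List.cons.inj hl).1
        subst hyw
        rw [hl, pathCost_append]
        have hn : (k :: w :: t).Nodup := by
          have := List.nodup_middle.mp hnd
          exact this.sublist (by simp)
        have h2 := hcyc k w t hn
        simp only [List.cons_append, pathCost] at h2 ⊢
        linarith
    · exact hpm k (w :: p w) (List.nodup_cons.mpr ⟨hk, hp w⟩)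
  refine ⟨fun k => pathCost a (k :: p k) + ∑ j, |pathCost a (j :: p j)|, ?_, ?_⟩
  · intro k
    have h := Finset.single_le_sum (f := fun j => |pathCost a (j :: p j)|)
      (fun i _ => abs_nonneg _) (Finset.mem_univ k)
    have h2 := neg_abs_le (pathCost a (k :: p k))
    simp only at h ⊢
    linarith
  · intro k w
    have h := key k w
    simp only [a] at h ⊢
    linarith
end

section
/- Let I be a finite nonempty index set and β ∈ (0,1). The order-β Rényi divergence D_β(P‖Q) = (1/(β−1))·ln( ∑_{i∈I} P_i^β Q_i^{1−β} ) is jointly convex on pairs of full-support pmfs on I: for all full-support pmfs P₀, P₁, Q₀, Q₁ on I and all t ∈ [0,1], D_β( tP₁ + (1−t)P₀ ‖ tQ₁ + (1−t)Q₀ ) ≤ t·D_β(P₁‖Q₁) + (1−t)·D_β(P₀‖Q₀). -/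
open Finset

lemma renyi_aux {β t a b c d : ℝ} (h0 : 0 < β) (h1 : β < 1) (ht0 : 0 ≤ t) (ht1 : t ≤ 1)
    (ha : 0 < a) (hb : 0 < b) (hc : 0 < c) (hd : 0 < d) :
    0 < t * a + (1-t) * b ∧
    t * (a ^ β * c ^ (1-β)) + (1-t) * (b ^ β * d ^ (1-β))
      ≤ (t * a + (1-t) * b) ^ β * (t * c + (1-t) * d) ^ (1-β) := by
  have pos : ∀ x y : ℝ, 0 < x → 0 < y → 0 < t * x + (1-t) * y := by
    intro x y hx hy
    rcases ht0.eq_or_lt with h | h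
    · subst h; simpa using hy
    · have := mul_pos h hx
      have := mul_nonneg (sub_nonneg.2 ht1) hy.le
      linarith
  have hX := pos a b ha hb
  have hY := pos c d hc hd
  refine ⟨hX, ?_⟩
  set X := t * a + (1-t) * b with hXd
  set Y := t * c + (1-t) * d with hYd
  have hM : 0 < X ^ β * Y ^ (1-β) := by positivity
  have key : ∀ x y : ℝ, 0 < x → 0 < y →
      x ^ β * y ^ (1-β) ≤ (β * (x / X) + (1-β) * (y / Y)) * (X ^ β * Y ^ (1-β)) := by
    intro x y hx hy
    have := Real.geom_mean_le_arith_mean2_weighted h0.le (sub_nonneg.2 h1.le)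
      (div_pos hx hX).le (div_pos hy hY).le (by ring)
    rw [Real.div_rpow hx.le hX.le, Real.div_rpow hy.le hY.le, div_mul_div_comm,
      div_le_iff₀ hM] at this
    exact this
  have e : t * (β * (a / X) + (1-β) * (c / Y)) + (1-t) * (β * (b / X) + (1-β) * (d / Y)) = 1 := by
    have e1 : (t * a + (1-t) * b) / X = 1 := div_self hX.ne'
    have e2 : (t * c + (1-t) * d) / Y = 1 := div_self hY.ne'
    calc _ = β * ((t * a + (1-t) * b) / X) + (1-β) * ((t * c + (1-t) * d) / Y) := by ring
      _ = 1 := by rw [e1, e2]; ring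
  have k1 := mul_le_mul_of_nonneg_left (key a c ha hc) ht0
  have k2 := mul_le_mul_of_nonneg_left (key b d hb hd) (sub_nonneg.2 ht1)
  calc _ ≤ _ := add_le_add k1 k2
    _ = (t * (β * (a / X) + (1-β) * (c / Y)) + (1-t) * (β * (b / X) + (1-β) * (d / Y)))
        * (X ^ β * Y ^ (1-β)) := by ring
    _ = _ := by rw [e, one_mul]

/-- For `β ∈ (0,1)`, the order-`β` Rényi divergence is jointly convex on pairs of
full-support pmfs on a finite set. -/
theorem renyi_divergence_jointly_convex
    {I : Type*} [Fintype I] [Nonempty I]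
    (β : ℝ) (hβ : β ∈ Set.Ioo (0:ℝ) 1)
    (P₀ P₁ Q₀ Q₁ : I → ℝ)
    (hP₀pos : ∀ i, 0 < P₀ i) (hP₀sum : ∑ i, P₀ i = 1)
    (hP₁pos : ∀ i, 0 < P₁ i) (hP₁sum : ∑ i, P₁ i = 1)
    (hQ₀pos : ∀ i, 0 < Q₀ i) (hQ₀sum : ∑ i, Q₀ i = 1)
    (hQ₁pos : ∀ i, 0 < Q₁ i) (hQ₁sum : ∑ i, Q₁ i = 1)
    (t : ℝ) (ht : t ∈ Set.Icc (0:ℝ) 1) :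
    (1/(β-1)) * Real.log
        (∑ i, (t * P₁ i + (1-t) * P₀ i) ^ β * (t * Q₁ i + (1-t) * Q₀ i) ^ (1-β))
      ≤ t * ((1/(β-1)) * Real.log (∑ i, (P₁ i) ^ β * (Q₁ i) ^ (1-β)))
        + (1-t) * ((1/(β-1)) * Real.log (∑ i, (P₀ i) ^ β * (Q₀ i) ^ (1-β))) := by
  obtain ⟨h0, h1⟩ := hβ
  obtain ⟨ht0, ht1⟩ := ht
  have hS : ∀ P Q : I → ℝ, (∀ i, 0 < P i) → (∀ i, 0 < Q i) →
      0 < ∑ i, (P i) ^ β * (Q i) ^ (1-β) := fun P Q hP hQ =>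
    Finset.sum_pos (fun i _ => mul_pos (Real.rpow_pos_of_pos (hP i) _)
      (Real.rpow_pos_of_pos (hQ i) _)) Finset.univ_nonempty
  have s1 := hS P₁ Q₁ hP₁pos hQ₁pos
  have s0 := hS P₀ Q₀ hP₀pos hQ₀pos
  have hle : t * (∑ i, (P₁ i) ^ β * (Q₁ i) ^ (1-β)) + (1-t) * (∑ i, (P₀ i) ^ β * (Q₀ i) ^ (1-β))
      ≤ ∑ i, (t * P₁ i + (1-t) * P₀ i) ^ β * (t * Q₁ i + (1-t) * Q₀ i) ^ (1-β) := by
    rw [Finset.mul_sum, Finset.mul_sum, ← Finset.sum_add_distrib]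
    exact Finset.sum_le_sum fun i _ =>
      (renyi_aux h0 h1 ht0 ht1 (hP₁pos i) (hP₀pos i) (hQ₁pos i) (hQ₀pos i)).2
  have hpos := (renyi_aux h0 h1 ht0 ht1 s1 s0 s1 s0).1
  have hc := strictConcaveOn_log_Ioi.concaveOn.2 (Set.mem_Ioi.2 s1) (Set.mem_Ioi.2 s0) ht0
    (sub_nonneg.2 ht1) (by ring)
  simp only [smul_eq_mul] at hc
  have hl := hc.trans (Real.log_le_log hpos hle)
  have hn : 1/(β-1) ≤ 0 := one_div_nonpos.2 (by linarith)
  have := mul_le_mul_of_nonpos_left hl hn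
  linarith
end

section
/- Fix a full-support pmf μ on the finite set X and β ∈ (0,1). Then the Rényi mutual information p ↦ I_β(p) = (1/(β−1))·ln( ∑_{x,a} p(x,a)^β μ(x)^{1−β} q_p(a)^{1−β} ), where q_p(a) = ∑_x p(x,a), is a convex function on the convex set of full-support joint pmfs p on X×A whose X-marginal equals μ. Consequently, for every κ_max > 0 the feasible set { p : p full-support joint pmf, ∑_a p(x,a) = μ(x) for all x, I_β(p) ≤ κ_max } is convex. -/
open Finset

/-- The order-`β` Rényi mutual information of a joint pmf `p` on `X × A` whose
`X`-marginal is the fixed prior `μ`: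
`I_β(p) = (1/(β−1)) ln( ∑_{x,a} p(x,a)^β μ(x)^{1−β} q_p(a)^{1−β} )`
where `q_p(a) = ∑_x p(x,a)`. -/
noncomputable def renyiMI {X A : Type*} [Fintype X] [Fintype A]
    (β : ℝ) (μ : X → ℝ) (p : X → A → ℝ) : ℝ :=
  (1/(β-1)) * Real.log (∑ x, ∑ a,
    (p x a) ^ β * (μ x) ^ (1-β) * (∑ y, p y a) ^ (1-β))


lemma geo_concave {β : ℝ} (h0 : 0 < β) (h1 : β < 1) {u₁ u₂ v₁ v₂ s t : ℝ}
    (hu₁ : 0 < u₁) (hu₂ : 0 < u₂) (hv₁ : 0 < v₁) (hv₂ : 0 < v₂)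
    (hs : 0 ≤ s) (ht : 0 ≤ t) (hst : s + t = 1) :
    s * (u₁ ^ β * v₁ ^ (1 - β)) + t * (u₂ ^ β * v₂ ^ (1 - β)) ≤
      (s * u₁ + t * u₂) ^ β * (s * v₁ + t * v₂) ^ (1 - β) := by
  have key : ∀ a b : ℝ, 0 < a → 0 < b → 0 < s * a + t * b := by
    intro a b ha hb
    rcases hs.eq_or_lt with h | h
    · have : t = 1 := by linarith
      rw [← h, this]; linarith
    · have := mul_pos h ha
      have := mul_nonneg ht hb.le
      linarith
  have hU := key u₁ u₂ hu₁ hu₂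
  have hV := key v₁ v₂ hv₁ hv₂
  generalize hUd : s * u₁ + t * u₂ = U at *
  generalize hVd : s * v₁ + t * v₂ = V at *
  have hP : 0 < U ^ β * V ^ (1 - β) := by positivity
  have step : ∀ u v : ℝ, 0 < u → 0 < v →
      u ^ β * v ^ (1 - β) ≤ (U ^ β * V ^ (1 - β)) * (β * (u / U) + (1 - β) * (v / V)) := by
    intro u v hu hv
    have h := Real.geom_mean_le_arith_mean2_weighted h0.le (by linarith : 0 ≤ 1 - β)
      (div_pos hu hU).le (div_pos hv hV).le (by ring)
    rw [Real.div_rpow hu.le hU.le, Real.div_rpow hv.le hV.le, div_mul_div_comm,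
      div_le_iff₀ hP] at h
    linarith
  have e1 := mul_le_mul_of_nonneg_left (step u₁ v₁ hu₁ hv₁) hs
  have e2 := mul_le_mul_of_nonneg_left (step u₂ v₂ hu₂ hv₂) ht
  have e3 : s * (β * (u₁ / U) + (1 - β) * (v₁ / V)) + t * (β * (u₂ / U) + (1 - β) * (v₂ / V)) = 1 := by
    have : s * (β * (u₁ / U) + (1 - β) * (v₁ / V)) + t * (β * (u₂ / U) + (1 - β) * (v₂ / V))
      = β * ((s * u₁ + t * u₂) / U) + (1 - β) * ((s * v₁ + t * v₂) / V) := by ring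
    rw [this, hUd, hVd, div_self hU.ne', div_self hV.ne']; ring
  calc _ ≤ _ := add_le_add e1 e2
    _ = (U ^ β * V ^ (1 - β)) * (s * (β * (u₁ / U) + (1 - β) * (v₁ / V)) + t * (β * (u₂ / U) + (1 - β) * (v₂ / V))) := by ring
    _ = _ := by rw [e3, mul_one]

lemma convex_dom {X A : Type*} [Fintype X] [Fintype A] (μ : X → ℝ) :
    Convex ℝ {p : X → A → ℝ | (∀ x a, 0 < p x a) ∧ (∑ x, ∑ a, p x a = 1) ∧
        (∀ x, ∑ a, p x a = μ x)} := by
  rintro p ⟨hp, hp1, hpm⟩ r ⟨hr, hr1, hrm⟩ s t hs ht hst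
  refine ⟨fun x a => ?_, ?_, fun x => ?_⟩
  · exact convex_Ioi (0:ℝ) (hp x a) (hr x a) hs ht hst
  · simp only [Pi.add_apply, Pi.smul_apply, smul_eq_mul, sum_add_distrib, ← mul_sum, hp1, hr1]
    linarith
  · simp only [Pi.add_apply, Pi.smul_apply, smul_eq_mul, sum_add_distrib, ← mul_sum, hpm, hrm]
    rw [← add_mul, hst, one_mul]

lemma renyi_convexOn {X A : Type*} [Fintype X] [Fintype A] [Nonempty X] [Nonempty A]
    (β : ℝ) (hβ : β ∈ Set.Ioo (0:ℝ) 1) (μ : X → ℝ) (hμpos : ∀ x, 0 < μ x) :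
    ConvexOn ℝ
      {p : X → A → ℝ | (∀ x a, 0 < p x a) ∧ (∑ x, ∑ a, p x a = 1) ∧
        (∀ x, ∑ a, p x a = μ x)}
      (renyiMI β μ) := by
  obtain ⟨h0, h1⟩ := hβ
  refine ⟨convex_dom μ, ?_⟩
  rintro p ⟨hp, -, -⟩ r ⟨hr, -, -⟩ s t hs ht hst
  have qpos : ∀ p : X → A → ℝ, (∀ x a, 0 < p x a) → ∀ a, 0 < ∑ y, p y a := fun p hp a =>
    sum_pos (fun y _ => hp y a) univ_nonempty
  have Fpos : ∀ p : X → A → ℝ, (∀ x a, 0 < p x a) → 0 < ∑ x, ∑ a,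
      (p x a) ^ β * (μ x) ^ (1-β) * (∑ y, p y a) ^ (1-β) := fun p hp =>
    sum_pos (fun x _ => sum_pos (fun a _ => mul_pos (mul_pos (Real.rpow_pos_of_pos (hp x a) _)
      (Real.rpow_pos_of_pos (hμpos x) _)) (Real.rpow_pos_of_pos (qpos p hp a) _))
      univ_nonempty) univ_nonempty
  have hF : s * (∑ x, ∑ a, (p x a) ^ β * (μ x) ^ (1-β) * (∑ y, p y a) ^ (1-β))
      + t * (∑ x, ∑ a, (r x a) ^ β * (μ x) ^ (1-β) * (∑ y, r y a) ^ (1-β))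
      ≤ ∑ x, ∑ a, ((s • p + t • r) x a) ^ β * (μ x) ^ (1-β)
        * (∑ y, (s • p + t • r) y a) ^ (1-β) := by
    simp only [Pi.add_apply, Pi.smul_apply, smul_eq_mul, mul_sum, ← sum_add_distrib]
    refine sum_le_sum fun x _ => sum_le_sum fun a _ => ?_
    have h := geo_concave h0 h1 (hp x a) (hr x a) (qpos p hp a) (qpos r hr a) hs ht hst
    have h' := mul_le_mul_of_nonneg_left h (Real.rpow_pos_of_pos (hμpos x) (1-β)).le
    simp only [sum_add_distrib, ← mul_sum]
    linarith
  have hc := strictConcaveOn_log_Ioi.concaveOn.2 (Set.mem_Ioi.2 (Fpos p hp))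
    (Set.mem_Ioi.2 (Fpos r hr)) hs ht hst
  simp only [smul_eq_mul] at hc
  have hpos := convex_Ioi (0:ℝ) (Set.mem_Ioi.2 (Fpos p hp)) (Set.mem_Ioi.2 (Fpos r hr)) hs ht hst
  simp only [smul_eq_mul, Set.mem_Ioi] at hpos
  have hl := hc.trans (Real.log_le_log hpos hF)
  have hn : 1 / (β - 1) ≤ 0 := one_div_nonpos.2 (by linarith)
  have := mul_le_mul_of_nonpos_left hl hn
  simp only [renyiMI, smul_eq_mul]
  linarith

/-- For fixed full-support prior `μ` and `β ∈ (0,1)`, the Rényi mutual information is a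
convex function on the convex set of full-support joint pmfs with `X`-marginal `μ`;
consequently, for every `κ_max > 0` the feasible set of the information-constrained
optimization problem is convex. -/
theorem renyiMI_convexOn_and_feasible_set_convex
    {X A : Type*} [Fintype X] [Fintype A] [Nonempty X] [Nonempty A]
    (β : ℝ) (hβ : β ∈ Set.Ioo (0:ℝ) 1)
    (μ : X → ℝ) (hμpos : ∀ x, 0 < μ x) (hμsum : ∑ x, μ x = 1) :
    (ConvexOn ℝ
      {p : X → A → ℝ | (∀ x a, 0 < p x a) ∧ (∑ x, ∑ a, p x a = 1) ∧
        (∀ x, ∑ a, p x a = μ x)}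
      (renyiMI β μ))
    ∧ (∀ κmax : ℝ, 0 < κmax →
        Convex ℝ
          {p : X → A → ℝ | (∀ x a, 0 < p x a) ∧ (∑ x, ∑ a, p x a = 1) ∧
            (∀ x, ∑ a, p x a = μ x) ∧ renyiMI β μ p ≤ κmax}) := by
  have h := renyi_convexOn (A := A) β hβ μ hμpos
  refine ⟨h, fun κ _ => ?_⟩
  have h2 := h.convex_le κ
  simpa only [Set.mem_setOf_eq, and_assoc] using h2
end

section
/- Let I be a finite nonempty index set and β > 1. The order-β Rényi divergence D_β(P‖Q) = (1/(β−1))·ln( ∑_{i∈I} P_i^β Q_i^{1−β} ) is jointly quasi-convex on pairs of full-support pmfs on I: for all full-support pmfs P₀, P₁, Q₀, Q₁ on I and all t ∈ [0,1], D_β( tP₁ + (1−t)P₀ ‖ tQ₁ + (1−t)Q₀ ) ≤ max( D_β(P₁‖Q₁), D_β(P₀‖Q₀) ). -/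
open Finset

lemma persp_eq (β p q : ℝ) (hp : 0 < p) (hq : 0 < q) :
    p ^ β * q ^ (1 - β) = q * (p / q) ^ β := by
  rw [Real.rpow_sub hq, Real.rpow_one, Real.div_rpow hp.le hq.le]
  ring

lemma persp_convex (β : ℝ) (hβ : 1 < β) (p₀ p₁ q₀ q₁ t : ℝ) (hp₀ : 0 < p₀) (hp₁ : 0 < p₁)
    (hq₀ : 0 < q₀) (hq₁ : 0 < q₁) (ht0 : 0 < t) (ht1 : t < 1) :
    (t * p₁ + (1-t) * p₀) ^ β * (t * q₁ + (1-t) * q₀) ^ (1-β)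
      ≤ t * (p₁ ^ β * q₁ ^ (1-β)) + (1-t) * (p₀ ^ β * q₀ ^ (1-β)) := by
  have h1 : 0 < 1 - t := by linarith
  have hp : 0 < t * p₁ + (1-t) * p₀ := by positivity
  have hq : 0 < t * q₁ + (1-t) * q₀ := by positivity
  rw [persp_eq β _ _ hp hq, persp_eq β _ _ hp₁ hq₁, persp_eq β _ _ hp₀ hq₀]
  set q := t * q₁ + (1-t) * q₀ with hqdef
  have m1 : p₁ / q₁ ∈ Set.Ici (0:ℝ) := Set.mem_Ici.2 (by positivity)
  have m0 : p₀ / q₀ ∈ Set.Ici (0:ℝ) := Set.mem_Ici.2 (by positivity)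
  have w1 : 0 ≤ t * q₁ / q := by positivity
  have w0 : 0 ≤ (1-t) * q₀ / q := by positivity
  have w : t * q₁ / q + (1-t) * q₀ / q = 1 := by rw [← add_div, ← hqdef, div_self hq.ne']
  have key := (convexOn_rpow hβ.le).2 m1 m0 w1 w0 w
  simp only [smul_eq_mul] at key
  have e : t * q₁ / q * (p₁ / q₁) + (1-t) * q₀ / q * (p₀ / q₀)
      = (t * p₁ + (1-t) * p₀) / q := by
    field_simp
  rw [e] at key
  calc _ ≤ q * (t * q₁ / q * (p₁ / q₁) ^ β + (1-t) * q₀ / q * (p₀ / q₀) ^ β) :=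
        mul_le_mul_of_nonneg_left key hq.le
    _ = _ := by
        generalize (p₁ / q₁) ^ β = A
        generalize (p₀ / q₀) ^ β = B
        clear_value q
        field_simp

/-- For `β > 1`, the order-`β` Rényi divergence is jointly quasi-convex on pairs of
full-support pmfs on a finite set. -/
theorem renyi_divergence_jointly_quasiconvex
    {I : Type*} [Fintype I] [Nonempty I]
    (β : ℝ) (hβ : 1 < β)
    (P₀ P₁ Q₀ Q₁ : I → ℝ)
    (hP₀pos : ∀ i, 0 < P₀ i) (hP₀sum : ∑ i, P₀ i = 1)
    (hP₁pos : ∀ i, 0 < P₁ i) (hP₁sum : ∑ i, P₁ i = 1)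
    (hQ₀pos : ∀ i, 0 < Q₀ i) (hQ₀sum : ∑ i, Q₀ i = 1)
    (hQ₁pos : ∀ i, 0 < Q₁ i) (hQ₁sum : ∑ i, Q₁ i = 1)
    (t : ℝ) (ht : t ∈ Set.Icc (0:ℝ) 1) :
    (1/(β-1)) * Real.log
        (∑ i, (t * P₁ i + (1-t) * P₀ i) ^ β * (t * Q₁ i + (1-t) * Q₀ i) ^ (1-β))
      ≤ max ((1/(β-1)) * Real.log (∑ i, (P₁ i) ^ β * (Q₁ i) ^ (1-β)))
            ((1/(β-1)) * Real.log (∑ i, (P₀ i) ^ β * (Q₀ i) ^ (1-β))) := by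
  obtain ⟨ht0, ht1⟩ := ht
  rcases ht0.eq_or_lt with rfl | ht0
  · simp
  rcases ht1.eq_or_lt with rfl | ht1
  · simp
  have h1 : 0 < 1 - t := by linarith
  have hc : 0 ≤ 1 / (β - 1) := one_div_nonneg.2 (by linarith)
  rw [← mul_max_of_nonneg _ _ hc]
  refine mul_le_mul_of_nonneg_left ?_ hc
  have hS : ∀ P Q : I → ℝ, (∀ i, 0 < P i) → (∀ i, 0 < Q i) →
      0 < ∑ i, (P i) ^ β * (Q i) ^ (1-β) := fun P Q hP hQ =>
    Finset.sum_pos (fun i _ => mul_pos (Real.rpow_pos_of_pos (hP i) _)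
      (Real.rpow_pos_of_pos (hQ i) _)) Finset.univ_nonempty
  have hL := hS (fun i => t * P₁ i + (1-t) * P₀ i) (fun i => t * Q₁ i + (1-t) * Q₀ i)
    (fun i => add_pos (mul_pos ht0 (hP₁pos i)) (mul_pos h1 (hP₀pos i)))
    (fun i => add_pos (mul_pos ht0 (hQ₁pos i)) (mul_pos h1 (hQ₀pos i)))
  have hle : ∑ i, (t * P₁ i + (1-t) * P₀ i) ^ β * (t * Q₁ i + (1-t) * Q₀ i) ^ (1-β)
      ≤ t * ∑ i, (P₁ i) ^ β * (Q₁ i) ^ (1-β) + (1-t) * ∑ i, (P₀ i) ^ β * (Q₀ i) ^ (1-β) := by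
    rw [Finset.mul_sum, Finset.mul_sum, ← Finset.sum_add_distrib]
    exact Finset.sum_le_sum fun i _ => persp_convex β hβ _ _ _ _ t (hP₀pos i) (hP₁pos i)
      (hQ₀pos i) (hQ₁pos i) ht0 ht1
  rcases le_total (∑ i, (P₀ i) ^ β * (Q₀ i) ^ (1-β)) (∑ i, (P₁ i) ^ β * (Q₁ i) ^ (1-β)) with h | h
  · exact le_max_of_le_left (Real.log_le_log hL (by nlinarith))
  · exact le_max_of_le_right (Real.log_le_log hL (by nlinarith))
end

section
/- (Empirical Bernstein inequality, the concentration ingredient of the paper's finite-sample bound.) Let Z₁, …, Z_n with n ≥ 2 be i.i.d. random variables taking values in [0,1], let Z̄ = (1/n)·∑_{i=1}^n Z_i be the sample mean and V_n = (1/(n(n−1)))·∑_{1 ≤ i < j ≤ n} (Z_i − Z_j)² the (unbiased) sample variance. Then for every γ ∈ (0,1), with probability at least 1 − γ, E[Z₁] ≤ Z̄ + √( 2·V_n·ln(2/γ) / n ) + 7·ln(2/γ) / (3·(n−1)). -/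
open Finset MeasureTheory ProbabilityTheory
open scoped Classical

lemma eb_exp_neg (x : ℝ) (hx : 0 ≤ x) : Real.exp (-x) ≤ 1 - x + x^2/2 := by
  have h := Real.quadratic_le_exp_of_nonneg hx
  rw [Real.exp_neg, inv_le_iff_one_le_mul₀ (Real.exp_pos _)]
  have h2 : 0 ≤ 1 - x + x^2/2 := by nlinarith [sq_nonneg (x-1)]
  nlinarith [mul_le_mul_of_nonneg_left h h2, sq_nonneg (x^2)]

lemma eb_pade1 (y : ℝ) (hy : 0 ≤ y) : Real.exp y * (2 - y) ≤ 2 + y := by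
  have hd : ∀ x : ℝ, HasDerivAt (fun y => 2 + y - Real.exp y * (2 - y))
      (1 - (Real.exp x * (2 - x) + Real.exp x * (-1))) x := by
    intro x
    exact ((hasDerivAt_id x).const_add 2).sub
      ((Real.hasDerivAt_exp x).mul ((hasDerivAt_id x).const_sub 2))
  have hm : Monotone (fun y => 2 + y - Real.exp y * (2 - y)) := by
    apply monotone_of_deriv_nonneg (fun x => (hd x).differentiableAt)
    intro x
    rw [(hd x).deriv]
    have := Real.add_one_le_exp (-x)
    have h2 : Real.exp x * Real.exp (-x) = 1 := by rw [← Real.exp_add]; simp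
    nlinarith [Real.exp_pos x]
  have := hm hy
  simp at this
  linarith

lemma eb_pade2 (y : ℝ) (hy : 0 ≤ y) : Real.exp y * (6 - 2 * y) ≤ 6 + 4 * y + y ^ 2 := by
  have hd : ∀ x : ℝ, HasDerivAt (fun y => 6 + 4 * y + y ^ 2 - Real.exp y * (6 - 2 * y))
      (4 + 2 * x - (Real.exp x * (6 - 2 * x) + Real.exp x * (-2))) x := by
    intro x
    have h1 := ((((hasDerivAt_id x).const_mul 4).const_add 6).add ((hasDerivAt_id x).pow 2)).sub
      ((Real.hasDerivAt_exp x).mul (((hasDerivAt_id x).const_mul 2).const_sub 6))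
    exact h1.congr_deriv (by norm_num)
  have hm : MonotoneOn (fun y => 6 + 4 * y + y ^ 2 - Real.exp y * (6 - 2 * y)) (Set.Ici 0) := by
    apply monotoneOn_of_deriv_nonneg (convex_Ici 0)
    · exact fun x _ => (hd x).continuousAt.continuousWithinAt
    · exact fun x _ => (hd x).differentiableAt.differentiableWithinAt
    intro x hx
    rw [interior_Ici] at hx
    rw [(hd x).deriv]
    have := eb_pade1 x (le_of_lt hx)
    nlinarith
  have := hm (Set.mem_Ici.2 le_rfl) (Set.mem_Ici.2 hy) hy
  simp at this
  linarith

lemma eb_exp_bern (l y : ℝ) (hl0 : 0 ≤ l) (hl : l < 3) (hy : y ≤ l) :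
    Real.exp y ≤ 1 + y + y ^ 2 * (1 / (2 * (1 - l / 3))) := by
  have hc : (1:ℝ)/2 ≤ 1 / (2 * (1 - l / 3)) := by
    apply one_div_le_one_div_of_le <;> linarith
  rcases le_total y 0 with h | h
  · have := eb_exp_neg (-y) (by linarith)
    rw [neg_neg] at this
    nlinarith [mul_le_mul_of_nonneg_left hc (sq_nonneg y)]
  · have hc : 1 / (2 * (1 - y / 3)) ≤ 1 / (2 * (1 - l / 3)) := by
      apply one_div_le_one_div_of_le <;> linarith
    have h1 := eb_pade2 y h
    have h3 : 0 < 6 - 2 * y := by linarith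
    have h2 : Real.exp y ≤ (6 + 4 * y + y ^ 2) / (6 - 2 * y) := by
      rwa [le_div_iff₀ h3]
    have h4 : (6 + 4 * y + y ^ 2) / (6 - 2 * y) = 1 + y + y ^ 2 * (1 / (2 * (1 - y / 3))) := by
      have e : 2 * (1 - y / 3) = (6 - 2 * y) / 3 := by ring
      have h3' := h3.ne'
      rw [e, one_div_div, div_eq_iff h3', add_mul, mul_assoc, div_mul_cancel₀ _ h3']
      ring
    have := mul_le_mul_of_nonneg_left hc (sq_nonneg y)
    linarith

lemma eb_perm_const {n : ℕ} (g : Fin n → Fin n → ℝ) (a b a' b' : Fin n) (h : a ≠ b) (h' : a' ≠ b') :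
    ∑ σ : Equiv.Perm (Fin n), g (σ a) (σ b) = ∑ σ : Equiv.Perm (Fin n), g (σ a') (σ b') := by
  obtain ⟨τ, h1, h2⟩ : ∃ τ : Equiv.Perm (Fin n), τ a = a' ∧ τ b = b' := by
    have hc : Equiv.swap a a' b ≠ a' := by
      intro hc
      have : Equiv.swap a a' b = Equiv.swap a a' a := by rw [hc, Equiv.swap_apply_left]
      exact h ((Equiv.injective _ this).symm)
    refine ⟨Equiv.swap (Equiv.swap a a' b) b' * Equiv.swap a a', ?_, ?_⟩
    · rw [Equiv.Perm.mul_apply, Equiv.swap_apply_left, Equiv.swap_apply_of_ne_of_ne hc.symm h']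
    · rw [Equiv.Perm.mul_apply, Equiv.swap_apply_left]
  symm
  refine Fintype.sum_equiv (Equiv.mulRight τ) _ _ ?_
  intro σ
  simp [h1, h2]

lemma eb_perm {n : ℕ} (g : Fin n → Fin n → ℝ) (hg : ∀ i, g i i = 0) (a b : Fin n) (h : a ≠ b) :
    ((n:ℝ) * ((n:ℝ) - 1)) * ∑ σ : Equiv.Perm (Fin n), g (σ a) (σ b)
      = (n.factorial : ℝ) * ∑ i, ∑ j, g i j := by
  have e1 : ∀ σ : Equiv.Perm (Fin n), ∑ p ∈ (univ : Finset (Fin n)).offDiag, g (σ p.1) (σ p.2)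
      = ∑ i, ∑ j, g i j := by
    intro σ
    rw [← Finset.sum_product', Finset.univ_product_univ,
      ← Fintype.sum_equiv (σ.prodCongr σ) (fun p => g (σ p.1) (σ p.2)) (fun p => g p.1 p.2) (by simp)]
    apply Finset.sum_subset (Finset.subset_univ _)
    rintro ⟨x, y⟩ _ hp
    simp only [mem_offDiag, mem_univ, true_and, not_not, ne_eq] at hp
    subst hp
    exact hg _
  have e2 : ∑ p ∈ (univ : Finset (Fin n)).offDiag, ∑ σ : Equiv.Perm (Fin n), g (σ p.1) (σ p.2)
      = ((n:ℝ) * ((n:ℝ) - 1)) * ∑ σ : Equiv.Perm (Fin n), g (σ a) (σ b) := by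
    rw [Finset.sum_congr rfl (g := fun _ => ∑ σ : Equiv.Perm (Fin n), g (σ a) (σ b))]
    · rw [Finset.sum_const, Finset.offDiag_card, nsmul_eq_mul, Nat.cast_sub]
      · simp; left; ring
      · simp; exact Nat.le_mul_self n
    · rintro ⟨x, y⟩ hp
      simp at hp
      exact eb_perm_const g x y a b hp h
  rw [← e2, Finset.sum_comm, Finset.sum_congr rfl (fun σ _ => e1 σ)]
  simp [Fintype.card_perm]

noncomputable def ebV {n : ℕ} (z : Fin n → ℝ) : ℝ :=
  (1 / ((n:ℝ) * ((n:ℝ) - 1))) * ∑ i, ∑ j, if i < j then (z i - z j) ^ 2 else 0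

lemma ebV_nonneg {n : ℕ} (hn : 2 ≤ n) (z : Fin n → ℝ) : 0 ≤ ebV z := by
  have : (2:ℝ) ≤ n := by exact_mod_cast hn
  refine mul_nonneg (one_div_nonneg.2 (mul_nonneg (by linarith) (by linarith))) ?_
  refine Finset.sum_nonneg fun i _ => Finset.sum_nonneg fun j _ => ?_
  split_ifs <;> positivity

lemma ebV_perm {n : ℕ} (hn : 2 ≤ n) (z : Fin n → ℝ) (a b : Fin n) (h : a ≠ b) :
    ∑ σ : Equiv.Perm (Fin n), (z (σ a) - z (σ b)) ^ 2 / 2 = (n.factorial : ℝ) * ebV z := by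
  have h2 : (2:ℝ) ≤ n := by exact_mod_cast hn
  have key := eb_perm (fun i j => (z i - z j) ^ 2 / 2) (by simp) a b h
  have e : ∑ i, ∑ j, (z i - z j) ^ 2 / 2 = ∑ i, ∑ j, if i < j then (z i - z j) ^ 2 else 0 := by
    have s : ∑ i, ∑ j, (if i < j then (z i - z j) ^ 2 / 2 else 0)
        = ∑ i, ∑ j, (if j < i then (z i - z j) ^ 2 / 2 else 0) := by
      rw [Finset.sum_comm]
      refine Finset.sum_congr rfl fun i _ => Finset.sum_congr rfl fun j _ => ?_
      split_ifs
      · ring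
      · rfl
    have t : ∑ i, ∑ j, (z i - z j) ^ 2 / 2 = ∑ i, ∑ j, (if i < j then (z i - z j) ^ 2 / 2 else 0)
        + ∑ i, ∑ j, (if j < i then (z i - z j) ^ 2 / 2 else 0) := by
      simp only [← Finset.sum_add_distrib]
      refine Finset.sum_congr rfl fun i _ => Finset.sum_congr rfl fun j _ => ?_
      rcases lt_trichotomy i j with h | h | h
      · simp [h, h.not_gt]
      · simp [h]
      · simp [h, h.not_gt]
    rw [t, ← s]
    simp only [← Finset.sum_add_distrib]
    refine Finset.sum_congr rfl fun i _ => Finset.sum_congr rfl fun j _ => ?_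
    split_ifs <;> ring
  rw [e] at key
  have hp : (n:ℝ) * ((n:ℝ) - 1) ≠ 0 := by
    apply ne_of_gt; apply mul_pos <;> linarith
  rw [ebV]
  apply mul_left_cancel₀ hp
  rw [key, one_div, mul_left_comm ((n:ℝ) * ((n:ℝ) - 1)), mul_inv_cancel_left₀ hp]

lemma eb_integrable {Ω : Type*} [MeasurableSpace Ω] (P : Measure Ω) [IsProbabilityMeasure P]
    (f : Ω → ℝ) (hf : Measurable f) (C : ℝ) (h : ∀ ω, |f ω| ≤ C) : Integrable f P :=
  Integrable.of_bound hf.aestronglyMeasurable C (Filter.Eventually.of_forall h)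

lemma eb_int_eq {Ω : Type*} [MeasurableSpace Ω] (P : Measure Ω)
    (X Y : Ω → ℝ) (hX : Measurable X) (hY : Measurable Y) (h : Measure.map X P = Measure.map Y P)
    (f : ℝ → ℝ) (hf : Measurable f) : ∫ ω, f (X ω) ∂P = ∫ ω, f (Y ω) ∂P := by
  rw [← integral_map hX.aemeasurable hf.aestronglyMeasurable, h,
    integral_map hY.aemeasurable hf.aestronglyMeasurable]

lemma eb_prod {Ω : Type*} [MeasurableSpace Ω] (P : Measure Ω) [IsProbabilityMeasure P]
    {n : ℕ} (Z : Fin n → Ω → ℝ) (hmeas : ∀ i, Measurable (Z i)) (hindep : iIndepFun Z P)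
    {κ : Type*} (a b : κ → Fin n)
    (hd : ∀ k l, k ≠ l → a k ≠ a l ∧ a k ≠ b l ∧ b k ≠ a l ∧ b k ≠ b l)
    (f : ℝ × ℝ → ℝ) (hf : Measurable f) (s : Finset κ) :
    ∫ ω, ∏ k ∈ s, f (Z (a k) ω, Z (b k) ω) ∂P = ∏ k ∈ s, ∫ ω, f (Z (a k) ω, Z (b k) ω) ∂P := by
  induction s using Finset.induction_on with
  | empty => simp
  | insert k s hk ih =>
    simp only [Finset.prod_insert hk]
    rw [← ih]
    have hdis : Disjoint ({a k, b k} : Finset (Fin n)) (s.biUnion fun l => {a l, b l}) := by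
      rw [Finset.disjoint_biUnion_right]
      intro l hl
      have hkl : k ≠ l := by rintro rfl; exact hk hl
      obtain ⟨h1, h2, h3, h4⟩ := hd k l hkl
      rw [Finset.disjoint_left]
      intro x hx hx'
      simp only [mem_insert, mem_singleton] at hx hx'
      rcases hx with rfl | rfl <;> rcases hx' with h | h <;> contradiction
    have hI := hindep.indepFun_finset _ _ hdis hmeas
    have hma : ∀ l ∈ s, a l ∈ s.biUnion fun l => ({a l, b l} : Finset (Fin n)) := fun l hl =>
      Finset.mem_biUnion.2 ⟨l, hl, by simp⟩
    have hmb : ∀ l ∈ s, b l ∈ s.biUnion fun l => ({a l, b l} : Finset (Fin n)) := fun l hl =>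
      Finset.mem_biUnion.2 ⟨l, hl, by simp⟩
    have hka : a k ∈ ({a k, b k} : Finset (Fin n)) := by simp
    have hkb : b k ∈ ({a k, b k} : Finset (Fin n)) := by simp
    have hI2 := hI.comp (φ := fun z => f (z ⟨a k, hka⟩, z ⟨b k, hkb⟩))
      (ψ := fun z => ∏ l : s, f (z ⟨a l, hma l l.2⟩, z ⟨b l, hmb l l.2⟩))
      (by fun_prop) (by fun_prop)
    have e : ∀ ω, ∏ k ∈ s, f (Z (a k) ω, Z (b k) ω) = ∏ k : s, f (Z (a k) ω, Z (b k) ω) := by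
      intro ω
      rw [← Finset.prod_coe_sort]
    simp only [e]
    refine hI2.integral_fun_mul_eq_mul_integral ?_ ?_
    · exact Measurable.aestronglyMeasurable (by simp only [Function.comp_def]; fun_prop)
    · exact Measurable.aestronglyMeasurable (by simp only [Function.comp_def]; fun_prop)

section
variable {Ω : Type*} [MeasurableSpace Ω] (P : Measure Ω) [IsProbabilityMeasure P]
    {n : ℕ} (Z : Fin n → Ω → ℝ) (hmeas : ∀ i, Measurable (Z i)) (hindep : iIndepFun Z P)
    (i0 : Fin n) (hident : ∀ i, Measure.map (Z i) P = Measure.map (Z i0) P)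
    (hrange : ∀ i ω, Z i ω ∈ Set.Icc (0:ℝ) 1)
    (E V : ℝ) (hE : E = ∫ ω, Z i0 ω ∂P) (hV : V = ∫ ω, (Z i0 ω - E) ^ 2 ∂P)

include hmeas hrange hE in
lemma eb_E : 0 ≤ E ∧ E ≤ 1 := by
  have hi : Integrable (Z i0) P := eb_integrable P _ (hmeas i0) 1 fun ω => by
    have := hrange i0 ω
    rw [abs_le]; constructor <;> linarith [this.1, this.2]
  constructor
  · rw [hE]; exact integral_nonneg fun ω => (hrange i0 ω).1
  · rw [hE]
    calc _ ≤ ∫ ω, (1:ℝ) ∂P := integral_mono hi (integrable_const _) fun ω => (hrange i0 ω).2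
      _ = 1 := by simp

include hmeas hrange hE in
lemma eb_abs (i : Fin n) (ω : Ω) : |Z i ω - E| ≤ 1 := by
  have h := eb_E P Z hmeas i0 hrange E hE
  have := hrange i ω
  rw [abs_le]; constructor <;> linarith [this.1, this.2]

include hmeas hident hrange hE in
lemma eb_center (i : Fin n) : Integrable (fun ω => Z i ω - E) P ∧ ∫ ω, (Z i ω - E) ∂P = 0 := by
  have hi : Integrable (Z i) P := eb_integrable P _ (hmeas i) 1 fun ω => by
    have := hrange i ω
    rw [abs_le]; constructor <;> linarith [this.1, this.2]
  refine ⟨hi.sub (integrable_const _), ?_⟩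
  rw [integral_sub hi (integrable_const _)]
  have := eb_int_eq P (Z i) (Z i0) (hmeas i) (hmeas i0) (hident i) id measurable_id
  simp only [id] at this
  rw [this, ← hE]; simp

include hmeas hident hrange hE hV in
lemma eb_sq (i : Fin n) : Integrable (fun ω => (Z i ω - E) ^ 2) P ∧
    ∫ ω, (Z i ω - E) ^ 2 ∂P = V := by
  refine ⟨eb_integrable P _ (by have := hmeas i; fun_prop) 1 fun ω => ?_, ?_⟩
  · have := eb_abs P Z hmeas i0 hrange E hE i ω
    rw [abs_pow]
    exact pow_le_one₀ (abs_nonneg _) this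
  · rw [hV]
    exact eb_int_eq P (Z i) (Z i0) (hmeas i) (hmeas i0) (hident i) (fun x => (x - E) ^ 2)
      (by fun_prop)

include hmeas hindep hident hrange hE hV in
lemma eb_pair (a b : Fin n) (hab : a ≠ b) : ∫ ω, (Z a ω - Z b ω) ^ 2 / 2 ∂P = V := by
  have hma := hmeas a
  have hmb := hmeas b
  obtain ⟨ia, sa⟩ := eb_sq P Z hmeas i0 hident hrange E V hE hV a
  obtain ⟨ib, sb⟩ := eb_sq P Z hmeas i0 hident hrange E V hE hV b
  have hI := (hindep.indepFun hab).comp (φ := fun x => x - E) (ψ := fun x => x - E)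
    (by fun_prop) (by fun_prop)
  have hc : ∫ ω, (Z a ω - E) * (Z b ω - E) ∂P = 0 := by
    have := hI.integral_fun_mul_eq_mul_integral
      (Measurable.aestronglyMeasurable (by simp only [Function.comp_def]; fun_prop))
      (Measurable.aestronglyMeasurable (by simp only [Function.comp_def]; fun_prop))
    simp only [Function.comp_def] at this
    rw [this, (eb_center P Z hmeas i0 hident hrange E hE a).2, zero_mul]
  have ic : Integrable (fun ω => (Z a ω - E) * (Z b ω - E)) P :=
    eb_integrable P _ (by fun_prop) 1 fun ω => by
      rw [abs_mul]
      exact mul_le_one₀ (eb_abs P Z hmeas i0 hrange E hE a ω) (abs_nonneg _)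
        (eb_abs P Z hmeas i0 hrange E hE b ω)
  have e : ∀ ω, (Z a ω - Z b ω) ^ 2 / 2 = ((Z a ω - E) ^ 2 / 2 + (Z b ω - E) ^ 2 / 2)
      - (Z a ω - E) * (Z b ω - E) := by intro ω; ring
  have iab : Integrable (fun ω => (Z a ω - E) ^ 2 / 2 + (Z b ω - E) ^ 2 / 2) P :=
    (ia.div_const 2).add (ib.div_const 2)
  simp only [e]
  rw [integral_sub iab ic,
    integral_add (ia.div_const 2) (ib.div_const 2), integral_div, integral_div, sa, sb, hc]
  ring

include hmeas hindep hident hrange hE hV in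
lemma eb_mgf_pair (l : ℝ) (hl : 0 ≤ l) (a b : Fin n) (hab : a ≠ b) :
    ∫ ω, Real.exp (-(l * ((Z a ω - Z b ω) ^ 2 / 2))) ∂P ≤ Real.exp (- l * V + l ^ 2 * V / 4) := by
  have hma := hmeas a
  have hmb := hmeas b
  have hX : ∀ ω, 0 ≤ (Z a ω - Z b ω) ^ 2 / 2 ∧ (Z a ω - Z b ω) ^ 2 / 2 ≤ 1 / 2 := by
    intro ω
    obtain ⟨h1, h2⟩ := hrange a ω
    obtain ⟨h3, h4⟩ := hrange b ω
    constructor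
    · positivity
    · nlinarith
  have iX : Integrable (fun ω => (Z a ω - Z b ω) ^ 2 / 2) P :=
    eb_integrable P _ (by fun_prop) (1/2) fun ω => by
      rw [abs_of_nonneg (hX ω).1]; exact (hX ω).2
  have hpt : ∀ ω, Real.exp (-(l * ((Z a ω - Z b ω) ^ 2 / 2)))
      ≤ 1 + (-l + l ^ 2 / 4) * ((Z a ω - Z b ω) ^ 2 / 2) := by
    intro ω
    obtain ⟨h1, h2⟩ := hX ω
    have := eb_exp_neg _ (mul_nonneg hl h1)
    set x := (Z a ω - Z b ω) ^ 2 / 2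
    have : x ^ 2 ≤ x / 2 := by nlinarith
    nlinarith [sq_nonneg l, mul_le_mul_of_nonneg_left this (sq_nonneg l)]
  calc _ ≤ ∫ ω, (1 + (-l + l ^ 2 / 4) * ((Z a ω - Z b ω) ^ 2 / 2)) ∂P := by
        refine integral_mono ?_ ((integrable_const _).add (iX.const_mul _)) hpt
        refine eb_integrable P _ (by fun_prop) 1 fun ω => ?_
        rw [abs_of_pos (Real.exp_pos _), Real.exp_le_one_iff]
        linarith [mul_nonneg hl (hX ω).1]
    _ = 1 + (-l + l ^ 2 / 4) * V := by
        rw [integral_add (integrable_const _) (iX.const_mul _), integral_const_mul,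
          eb_pair P Z hmeas hindep i0 hident hrange E V hE hV a b hab]
        simp
    _ ≤ _ := by
        have := Real.add_one_le_exp (- l * V + l ^ 2 * V / 4)
        linarith

include hmeas hident hrange hE hV in
lemma eb_mgf_one (l : ℝ) (hl : 0 ≤ l) (hl3 : l < 3) (i : Fin n) :
    ∫ ω, Real.exp (l * (E - Z i ω)) ∂P ≤ Real.exp (l ^ 2 * V * (1 / (2 * (1 - l / 3)))) := by
  have hm := hmeas i
  obtain ⟨i1, s1⟩ := eb_center P Z hmeas i0 hident hrange E hE i
  obtain ⟨i2, s2⟩ := eb_sq P Z hmeas i0 hident hrange E V hE hV i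
  have hab := eb_abs P Z hmeas i0 hrange E hE i
  have hle : ∀ ω, l * (E - Z i ω) ≤ l := fun ω => by
    have := (abs_le.1 (hab ω)).1
    nlinarith
  set c := 1 / (2 * (1 - l / 3))
  have hpt : ∀ ω, Real.exp (l * (E - Z i ω)) ≤
      1 + (-l) * (Z i ω - E) + (l ^ 2 * c) * (Z i ω - E) ^ 2 := by
    intro ω
    have := eb_exp_bern l _ hl hl3 (hle ω)
    calc _ ≤ _ := this
      _ = _ := by simp only [c]; ring
  have j1 : Integrable (fun ω => 1 + (-l) * (Z i ω - E)) P :=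
    (integrable_const _).add (i1.const_mul _)
  calc _ ≤ ∫ ω, (1 + (-l) * (Z i ω - E) + (l ^ 2 * c) * (Z i ω - E) ^ 2) ∂P := by
        refine integral_mono ?_ (j1.add (i2.const_mul _)) hpt
        refine eb_integrable P _ (by fun_prop) (Real.exp l) fun ω => ?_
        rw [abs_of_pos (Real.exp_pos _), Real.exp_le_exp]
        exact hle ω
    _ = 1 + (l ^ 2 * c) * V := by
        rw [integral_add j1 (i2.const_mul _), integral_add (integrable_const _) (i1.const_mul _),
          integral_const_mul, integral_const_mul, s1, s2]
        simp
    _ ≤ _ := by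
        have := Real.add_one_le_exp (l ^ 2 * V * c)
        linarith

include hmeas hindep hident hrange hE hV in
lemma eb_bernstein (l : ℝ) (hl : 0 ≤ l) (hl3 : l < 3) (t : ℝ) :
    P.real {ω | t ≤ ∑ i, (E - Z i ω)} ≤
      Real.exp (-l * t + n * (l ^ 2 * V * (1 / (2 * (1 - l / 3))))) := by
  have hI : iIndepFun (fun i ω => E - Z i ω) P :=
    hindep.comp (fun _ x => E - x) (fun _ => by fun_prop)
  have hm : ∀ i, Measurable (fun ω => E - Z i ω) := fun i => (hmeas i).const_sub E
  have h1 := measure_ge_le_exp_mul_mgf (μ := P) (X := ∑ i, fun ω => E - Z i ω) t hl ?_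
  · rw [hI.mgf_sum hm] at h1
    have h2 : ∏ i, mgf (fun ω => E - Z i ω) P l ≤
        ∏ i : Fin n, Real.exp (l ^ 2 * V * (1 / (2 * (1 - l / 3)))) :=
      Finset.prod_le_prod (fun i _ => mgf_nonneg)
        (fun i _ => eb_mgf_one P Z hmeas i0 hident hrange E V hE hV l hl hl3 i)
    rw [Finset.prod_const, Finset.card_univ, Fintype.card_fin, ← Real.exp_nat_mul] at h2
    rw [Real.exp_add]
    simp only [Finset.sum_apply] at h1
    exact h1.trans (mul_le_mul_of_nonneg_left h2 (Real.exp_pos _).le)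
  · refine eb_integrable P _ (by fun_prop) (Real.exp (l * n)) fun ω => ?_
    rw [abs_of_pos (Real.exp_pos _), Real.exp_le_exp]
    refine mul_le_mul_of_nonneg_left ?_ hl
    rw [Finset.sum_apply]
    calc _ ≤ ∑ i : Fin n, (1:ℝ) := Finset.sum_le_sum fun i _ => by
          have := (abs_le.1 (eb_abs P Z hmeas i0 hrange E hE i ω)).1
          linarith
      _ = n := by simp

include hmeas hindep hident hrange hE hV in
lemma eb_mgf_V (hn : 2 ≤ n) (l : ℝ) (hl : 0 ≤ l) :
    ∫ ω, Real.exp (((n / 2 : ℕ) * l) * (- ebV (fun i => Z i ω))) ∂P ≤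
      Real.exp ((n / 2 : ℕ) * (- l * V + l ^ 2 * V / 4)) := by
  set m := n / 2 with hm
  let a0 : Fin m → Fin n := fun k => ⟨2 * k, by have := k.2; omega⟩
  let b0 : Fin m → Fin n := fun k => ⟨2 * k + 1, by have := k.2; omega⟩
  have hab0 : ∀ k, a0 k ≠ b0 k := by
    intro k h; simp [a0, b0, Fin.ext_iff] at h
  let f : ℝ × ℝ → ℝ := fun p => Real.exp (-(l * ((p.1 - p.2) ^ 2 / 2)))
  have hf : Measurable f := by fun_prop
  have hfb : ∀ p, 0 ≤ f p ∧ f p ≤ 1 := fun p => ⟨(Real.exp_pos _).le, by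
    simp only [f]; rw [Real.exp_le_one_iff]
    have : 0 ≤ l * ((p.1 - p.2) ^ 2 / 2) := by positivity
    linarith⟩
  have hσ : ∀ σ : Equiv.Perm (Fin n),
      Integrable (fun ω => ∏ k, f (Z (σ (a0 k)) ω, Z (σ (b0 k)) ω)) P ∧
      ∫ ω, ∏ k, f (Z (σ (a0 k)) ω, Z (σ (b0 k)) ω) ∂P
        ≤ Real.exp (m * (- l * V + l ^ 2 * V / 4)) := by
    intro σ
    constructor
    · refine eb_integrable P _ (by fun_prop) 1 fun ω => ?_
      rw [abs_of_nonneg (Finset.prod_nonneg fun k _ => (hfb _).1)]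
      exact Finset.prod_le_one (fun k _ => (hfb _).1) (fun k _ => (hfb _).2)
    rw [eb_prod P Z hmeas hindep (fun k => σ (a0 k)) (fun k => σ (b0 k)) ?_ f hf univ]
    · have h2 : ∏ k : Fin m, ∫ ω, f (Z (σ (a0 k)) ω, Z (σ (b0 k)) ω) ∂P ≤
          ∏ k : Fin m, Real.exp (- l * V + l ^ 2 * V / 4) :=
        Finset.prod_le_prod (fun k _ => integral_nonneg fun ω => (hfb _).1) fun k _ =>
          eb_mgf_pair P Z hmeas hindep i0 hident hrange E V hE hV l hl _ _
            (fun h => hab0 k (σ.injective h))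
      rwa [Finset.prod_const, Finset.card_univ, Fintype.card_fin, ← Real.exp_nat_mul] at h2
    · intro k j hkj
      have hkj' : (k : ℕ) ≠ j := fun h => hkj (Fin.ext h)
      simp only [ne_eq, EmbeddingLike.apply_eq_iff_eq, a0, b0, Fin.mk.injEq]
      omega
  have hN : (0:ℝ) < n.factorial := by exact_mod_cast n.factorial_pos
  have hpt : ∀ ω, Real.exp ((m * l) * (- ebV (fun i => Z i ω))) ≤
      ∑ σ : Equiv.Perm (Fin n), (n.factorial : ℝ)⁻¹ *
        ∏ k, f (Z (σ (a0 k)) ω, Z (σ (b0 k)) ω) := by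
    intro ω
    have hJ := convexOn_exp.map_sum_le (t := (univ : Finset (Equiv.Perm (Fin n))))
      (w := fun _ => (n.factorial : ℝ)⁻¹)
      (p := fun σ => ∑ k, -(l * ((Z (σ (a0 k)) ω - Z (σ (b0 k)) ω) ^ 2 / 2)))
      (fun _ _ => by positivity)
      (by simp [Fintype.card_perm]; exact mul_inv_cancel₀ hN.ne') (fun _ _ => Set.mem_univ _)
    simp only [smul_eq_mul] at hJ
    have hr : ∀ σ : Equiv.Perm (Fin n), ∏ k, f (Z (σ (a0 k)) ω, Z (σ (b0 k)) ω) =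
        Real.exp (∑ k, -(l * ((Z (σ (a0 k)) ω - Z (σ (b0 k)) ω) ^ 2 / 2))) := fun σ => by
      rw [Real.exp_sum]
    simp only [hr]
    refine le_trans (le_of_eq ?_) hJ
    congr 1
    rw [← Finset.mul_sum, Finset.sum_comm]
    have : ∀ k : Fin m, ∑ σ : Equiv.Perm (Fin n),
        -(l * ((Z (σ (a0 k)) ω - Z (σ (b0 k)) ω) ^ 2 / 2))
        = -(l * (n.factorial * ebV (fun i => Z i ω))) := by
      intro k
      rw [Finset.sum_neg_distrib, ← Finset.mul_sum,
        ebV_perm hn (fun i => Z i ω) (a0 k) (b0 k) (hab0 k)]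
    rw [Finset.sum_congr rfl fun k _ => this k]
    simp only [sum_const, card_univ, Fintype.card_fin, nsmul_eq_mul]
    field_simp
  calc _ ≤ ∫ ω, ∑ σ : Equiv.Perm (Fin n), (n.factorial : ℝ)⁻¹ *
        ∏ k, f (Z (σ (a0 k)) ω, Z (σ (b0 k)) ω) ∂P := by
        refine integral_mono_of_nonneg (Filter.Eventually.of_forall fun ω => (Real.exp_pos _).le)
          ?_ (Filter.Eventually.of_forall hpt)
        exact integrable_finsetSum _ fun σ _ => (hσ σ).1.const_mul _
    _ = ∑ σ : Equiv.Perm (Fin n), (n.factorial : ℝ)⁻¹ *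
        ∫ ω, ∏ k, f (Z (σ (a0 k)) ω, Z (σ (b0 k)) ω) ∂P := by
        rw [integral_finsetSum _ fun σ _ => (hσ σ).1.const_mul _]
        simp only [integral_const_mul]
    _ ≤ ∑ σ : Equiv.Perm (Fin n), (n.factorial : ℝ)⁻¹ *
        Real.exp (m * (- l * V + l ^ 2 * V / 4)) :=
        Finset.sum_le_sum fun σ _ => mul_le_mul_of_nonneg_left (hσ σ).2 (by positivity)
    _ = _ := by
        simp only [sum_const, card_univ, Fintype.card_perm, Fintype.card_fin, nsmul_eq_mul]
        rw [mul_inv_cancel_left₀ hN.ne']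

include hmeas in
lemma ebV_measurable : Measurable (fun ω => ebV (fun i => Z i ω)) := by
  unfold ebV
  refine Measurable.const_mul ?_ _
  refine Finset.measurable_sum _ fun i _ => Finset.measurable_sum _ fun j _ => ?_
  have := hmeas i
  have := hmeas j
  split_ifs <;> fun_prop

include hmeas hindep hident hrange hE hV in
lemma eb_lower (hn : 2 ≤ n) (l : ℝ) (hl : 0 ≤ l) (s : ℝ) :
    P.real {ω | s ≤ V - ebV (fun i => Z i ω)} ≤
      Real.exp ((n / 2 : ℕ) * (- l * s + l ^ 2 * V / 4)) := by
  have hml : 0 ≤ ((n / 2 : ℕ) : ℝ) * l := by positivity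
  have h1 := measure_ge_le_exp_mul_mgf (μ := P) (X := fun ω => - ebV (fun i => Z i ω)) (s - V)
    hml ?_
  · have h2 := eb_mgf_V P Z hmeas hindep i0 hident hrange E V hE hV hn l hl
    have h3 := h1.trans (mul_le_mul_of_nonneg_left h2 (Real.exp_pos _).le)
    rw [← Real.exp_add] at h3
    have e1 : {ω | s ≤ V - ebV (fun i => Z i ω)} = {ω | s - V ≤ - ebV (fun i => Z i ω)} := by
      ext ω; simp only [Set.mem_ofPred_eq]
      constructor <;> intro h <;> linarith
    rw [e1]
    refine h3.trans (le_of_eq ?_)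
    congr 1
    ring
  · have := ebV_measurable Z hmeas
    refine eb_integrable P _ (by fun_prop) 1 fun ω => ?_
    rw [abs_of_pos (Real.exp_pos _), Real.exp_le_one_iff]
    have := mul_nonneg hml (ebV_nonneg hn (fun i => Z i ω))
    linarith

end

lemma eb_det (N L V W S E : ℝ) (hN : 2 ≤ N) (hL : 0 < L) (hV : 0 ≤ V) (hW : 0 ≤ W)
    (hA : E - S < Real.sqrt (2 * V * L / N) + L / (3 * N))
    (hB : V - W < Real.sqrt (2 * V * L / (N - 1))) :
    E ≤ S + Real.sqrt (2 * W * L / N) + 7 * L / (3 * (N - 1)) := by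
  have h1 : Real.sqrt (2 * V * L / N) = Real.sqrt V * Real.sqrt (2 * L / N) := by
    rw [← Real.sqrt_mul hV]; congr 1; ring
  have h2 : Real.sqrt (2 * W * L / N) = Real.sqrt W * Real.sqrt (2 * L / N) := by
    rw [← Real.sqrt_mul hW]; congr 1; ring
  have h3 : Real.sqrt (2 * V * L / (N - 1)) = Real.sqrt V * Real.sqrt (2 * L / (N - 1)) := by
    rw [← Real.sqrt_mul hV]; congr 1; ring
  have hpq : Real.sqrt (2 * L / N) ≤ Real.sqrt (2 * L / (N - 1)) := by
    apply Real.sqrt_le_sqrt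
    apply div_le_div_of_nonneg_left <;> linarith
  have hq2 : Real.sqrt (2 * L / (N - 1)) ^ 2 = 2 * L / (N - 1) :=
    Real.sq_sqrt (div_nonneg (by linarith) (by linarith))
  have hx2 := Real.sq_sqrt hV
  have hy2 := Real.sq_sqrt hW
  have hx := Real.sqrt_nonneg V
  have hy := Real.sqrt_nonneg W
  have hp := Real.sqrt_nonneg (2 * L / N)
  rw [h1] at hA
  rw [h3] at hB
  rw [h2]
  set x := Real.sqrt V
  set y := Real.sqrt W
  set p := Real.sqrt (2 * L / N)
  set q := Real.sqrt (2 * L / (N - 1))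
  have hxy : x ≤ y + q := by
    by_contra hc
    push Not at hc
    nlinarith [mul_nonneg hx (hp.trans hpq), mul_nonneg hy (hp.trans hpq)]
  have hxp : x * p ≤ y * p + q ^ 2 := by nlinarith
  have h4 : L / (3 * N) ≤ L / (3 * (N - 1)) := by
    apply div_le_div_of_nonneg_left <;> linarith
  have h5 : 7 * L / (3 * (N - 1)) = 2 * L / (N - 1) + L / (3 * (N - 1)) := by
    have : N - 1 ≠ 0 := by intro h; linarith
    field_simp; ring
  linarith

/-- Empirical Bernstein inequality: for `n ≥ 2` i.i.d. random variables `Z i` with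
values in `[0,1]`, with probability at least `1 − γ` the mean `E[Z]` is bounded by the
sample mean plus `√(2 Vₙ ln(2/γ)/n) + 7 ln(2/γ)/(3(n−1))`, where `Vₙ` is the unbiased
sample variance. -/
theorem empirical_bernstein
    {Ω : Type*} [MeasurableSpace Ω] (P : Measure Ω) [IsProbabilityMeasure P]
    (n : ℕ) (hn : 2 ≤ n) (Z : Fin n → Ω → ℝ)
    (hmeas : ∀ i, Measurable (Z i))
    (hindep : iIndepFun Z P)
    (hident : ∀ i, Measure.map (Z i) P = Measure.map (Z ⟨0, by omega⟩) P)
    (hrange : ∀ i ω, Z i ω ∈ Set.Icc (0:ℝ) 1)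
    (γ : ℝ) (hγ : γ ∈ Set.Ioo (0:ℝ) 1) :
    ENNReal.ofReal (1 - γ) ≤
      P {ω | (∫ ω', Z ⟨0, by omega⟩ ω' ∂P) ≤
        (1 / (n:ℝ)) * ∑ i, Z i ω
        + Real.sqrt (2 *
            ((1 / ((n:ℝ) * ((n:ℝ) - 1))) *
              ∑ i, ∑ j, if i < j then (Z i ω - Z j ω) ^ 2 else 0)
            * Real.log (2 / γ) / (n:ℝ))
        + 7 * Real.log (2 / γ) / (3 * ((n:ℝ) - 1))} := by
  have hn2 : (2:ℝ) ≤ n := by exact_mod_cast hn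
  have hn0 : (0:ℝ) < n := by linarith
  obtain ⟨hγ0, hγ1⟩ := hγ
  have hL : 0 < Real.log (2 / γ) := Real.log_pos (by rw [lt_div_iff₀ hγ0]; linarith)
  have hexp : Real.exp (-Real.log (2 / γ)) = γ / 2 := by
    rw [Real.exp_neg, Real.exp_log (by positivity), inv_div]
  set L := Real.log (2 / γ) with hLdef
  set i0 : Fin n := ⟨0, by omega⟩ with hi0
  obtain ⟨E, hE⟩ : ∃ E, E = ∫ ω, Z i0 ω ∂P := ⟨_, rfl⟩
  obtain ⟨V, hV⟩ : ∃ V, V = ∫ ω, (Z i0 ω - E) ^ 2 ∂P := ⟨_, rfl⟩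
  rw [← hE]
  have hV0 : 0 ≤ V := by rw [hV]; exact integral_nonneg fun ω => sq_nonneg _
  change ENNReal.ofReal (1 - γ) ≤ P {ω | E ≤ (1 / (n:ℝ)) * ∑ i, Z i ω
    + Real.sqrt (2 * ebV (fun i => Z i ω) * L / (n:ℝ)) + 7 * L / (3 * ((n:ℝ) - 1))}
  have hsum : ∀ ω, ∑ i, (E - Z i ω) = n * (E - (1 / (n:ℝ)) * ∑ i, Z i ω) := by
    intro ω
    rw [Finset.sum_sub_distrib]
    simp only [sum_const, card_univ, Fintype.card_fin, nsmul_eq_mul]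
    field_simp
  rcases hV0.eq_or_lt with hV00 | hVpos
  · have hae : ∀ᵐ ω ∂P, ∀ i, Z i ω = E := by
      rw [ae_all_iff]
      intro i
      obtain ⟨ia, sa⟩ := eb_sq P Z hmeas i0 hident hrange E V hE hV i
      rw [← hV00, integral_eq_zero_iff_of_nonneg (fun ω => sq_nonneg _) ia] at sa
      filter_upwards [sa] with ω hω
      have : (Z i ω - E) ^ 2 = 0 := hω
      have := pow_eq_zero_iff (two_ne_zero) |>.1 this
      linarith
    have hone : P {ω | E ≤ (1 / (n:ℝ)) * ∑ i, Z i ω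
        + Real.sqrt (2 * ebV (fun i => Z i ω) * L / (n:ℝ)) + 7 * L / (3 * ((n:ℝ) - 1))} = 1 := by
      rw [← measure_univ (μ := P)]
      apply measure_congr
      rw [Filter.eventuallyEq_univ]
      filter_upwards [hae] with ω hω
      have h1 := hsum ω
      simp only [hω, sub_self, Finset.sum_const_zero] at h1 ⊢
      have h2 : E - (1 / (n:ℝ)) * ∑ i : Fin n, E = 0 := by
        rcases mul_eq_zero.1 h1.symm with h | h
        · exact absurd h hn0.ne'
        · exact h
      have h3 : 0 ≤ 7 * L / (3 * ((n:ℝ) - 1)) := div_nonneg (by linarith) (by linarith)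
      have h4 := Real.sqrt_nonneg (2 * ebV (fun _ : Fin n => E) * L / (n:ℝ))
      linarith
    rw [hone]
    exact ENNReal.ofReal_le_one.2 (by linarith)
  set A : Set Ω := {ω | n * (Real.sqrt (2 * V * L / n) + L / (3 * n)) ≤ ∑ i, (E - Z i ω)} with hAdef
  set B : Set Ω := {ω | Real.sqrt (2 * V * L / ((n:ℝ) - 1)) ≤ V - ebV (fun i => Z i ω)} with hBdef
  have hPA : P.real A ≤ γ / 2 := by
    set r := Real.sqrt (2 * L / (n * V)) with hr
    have hr0 : 0 ≤ r := Real.sqrt_nonneg _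
    have hr2 : r ^ 2 = 2 * L / (n * V) := Real.sq_sqrt (by positivity)
    have hr2' : r ^ 2 * (n * V) = 2 * L := by rw [hr2]; field_simp
    have h13 : 0 < 1 + r / 3 := by linarith
    have hrV : Real.sqrt (2 * V * L / n) = r * V := by
      rw [Real.sqrt_eq_iff_mul_self_eq (by positivity) (by positivity)]
      have : r * V * (r * V) = r ^ 2 * V ^ 2 := by ring
      rw [this, hr2]; field_simp
    refine (eb_bernstein P Z hmeas hindep i0 hident hrange E V hE hV (r / (1 + r / 3))
      (by positivity) (by rw [div_lt_iff₀ h13]; linarith) _).trans ?_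
    rw [← hexp, Real.exp_le_exp, hrV]
    have e1 : 1 - r / (1 + r / 3) / 3 = 1 / (1 + r / 3) := by
      field_simp; ring
    rw [e1]
    have e2 : n * ((r / (1 + r / 3)) ^ 2 * V * (1 / (2 * (1 / (1 + r / 3))))) =
        L / (1 + r / 3) := by
      have : n * ((r / (1 + r / 3)) ^ 2 * V * (1 / (2 * (1 / (1 + r / 3))))) =
        (r ^ 2 * (n * V)) / 2 / (1 + r / 3) := by field_simp
      rw [this, hr2']; ring
    have e3 : -(r / (1 + r / 3)) * (n * (r * V + L / (3 * n))) =
        -(2 * L + r * L / 3) / (1 + r / 3) := by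
      rw [← hr2']; field_simp
    rw [e2, e3, ← add_div, div_le_iff₀ h13]
    linarith
  have hPB : P.real B ≤ γ / 2 := by
    set s := Real.sqrt (2 * V * L / ((n:ℝ) - 1)) with hs
    have hn1 : 0 < (n:ℝ) - 1 := by linarith
    have hs2 : s ^ 2 = 2 * V * L / ((n:ℝ) - 1) := Real.sq_sqrt (by positivity)
    refine (eb_lower P Z hmeas hindep i0 hident hrange E V hE hV hn (2 * s / V)
      (by positivity) _).trans ?_
    rw [← hexp, Real.exp_le_exp]
    have e1 : -(2 * s / V) * s + (2 * s / V) ^ 2 * V / 4 = - (2 * L / ((n:ℝ) - 1)) := by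
      have : -(2 * s / V) * s + (2 * s / V) ^ 2 * V / 4 = - (s ^ 2 / V) := by field_simp; ring
      rw [this, hs2]; field_simp
    rw [e1]
    have hm : (n:ℝ) - 1 ≤ 2 * ((n / 2 : ℕ) : ℝ) := by
      have : n ≤ 2 * (n / 2) + 1 := by omega
      have : (n:ℝ) ≤ 2 * ((n / 2 : ℕ) : ℝ) + 1 := by exact_mod_cast this
      linarith
    have : L ≤ ((n / 2 : ℕ) : ℝ) * (2 * L / ((n:ℝ) - 1)) := by
      rw [← mul_div_assoc, le_div_iff₀ hn1]
      nlinarith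
    linarith
  set G : Set Ω := {ω | E ≤ (1 / (n:ℝ)) * ∑ i, Z i ω
        + Real.sqrt (2 * ebV (fun i => Z i ω) * L / (n:ℝ)) + 7 * L / (3 * ((n:ℝ) - 1))} with hG
  have hcov : Set.univ ⊆ G ∪ (A ∪ B) := by
    intro ω _
    by_cases hA : ω ∈ A
    · exact Or.inr (Or.inl hA)
    by_cases hB : ω ∈ B
    · exact Or.inr (Or.inr hB)
    left
    simp only [hAdef, Set.mem_ofPred_eq, not_le] at hA
    simp only [hBdef, Set.mem_ofPred_eq, not_le] at hB
    rw [hsum ω] at hA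
    exact eb_det n L V _ _ E hn2 hL hV0 (ebV_nonneg hn _) (lt_of_mul_lt_mul_left hA hn0.le) hB
  have h1 : (1:ℝ) ≤ P.real G + (P.real A + P.real B) := by
    calc (1:ℝ) = P.real Set.univ := by simp
      _ ≤ P.real (G ∪ (A ∪ B)) := measureReal_mono hcov
      _ ≤ P.real G + P.real (A ∪ B) := measureReal_union_le _ _
      _ ≤ _ := by gcongr; exact measureReal_union_le _ _
  rw [ENNReal.ofReal_le_iff_le_toReal (measure_ne_top _ _)]
  change 1 - γ ≤ P.real G
  linarith
end
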